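/- A continuous function f : (0,∞) → (0,∞) is operator monotone if and only if f(A !_t B) ≤ f(A) #_t f(B) for every n ∈ ℕ, all n×n positive definite complex matrices A, B, and every t ∈ [0,1]. -/

import Mathlib

open Matrix
open scoped ComplexOrder

/-- The Loewner order on matrices: `A ≤ B` iff `B - A` is positive semidefinite. -/
def MLE {n : ℕ} (A B : Matrix (Fin n) (Fin n) ℂ) : Prop := (B - A).PosSemidef

/-- The `t`-weighted harmonic mean `A !_t B = ((1-t)A⁻¹ + tB⁻¹)⁻¹`. -/
noncomputable def wharm {n : ℕ} (t : ℝ) (A B : Matrix (Fin n) (Fin n) ℂ) :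
    Matrix (Fin n) (Fin n) ℂ := ((1 - t) • A⁻¹ + t • B⁻¹)⁻¹

/-- The `t`-weighted arithmetic mean `A ∇_t B = (1-t)A + tB`. -/
noncomputable def warith {n : ℕ} (t : ℝ) (A B : Matrix (Fin n) (Fin n) ℂ) :
    Matrix (Fin n) (Fin n) ℂ := (1 - t) • A + t • B

/-- Real powers of a matrix, via the continuous functional calculus. -/
noncomputable def mpow {n : ℕ} (A : Matrix (Fin n) (Fin n) ℂ) (r : ℝ) :
    Matrix (Fin n) (Fin n) ℂ := cfc (fun x : ℝ => x ^ r) A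

/-- The `t`-weighted geometric mean `A #_t B = A^{1/2} (A^{-1/2} B A^{-1/2})^t A^{1/2}`. -/
noncomputable def wgeom {n : ℕ} (t : ℝ) (A B : Matrix (Fin n) (Fin n) ℂ) :
    Matrix (Fin n) (Fin n) ℂ :=
  mpow A (1/2) * mpow (mpow A (-(1/2)) * B * mpow A (-(1/2))) t * mpow A (1/2)

/-- `f` is operator monotone (increasing): order preserving on positive definite
matrices of every size, via the continuous functional calculus. -/
def OperatorMonotone (f : ℝ → ℝ) : Prop :=
  ∀ (n : ℕ) (A B : Matrix (Fin n) (Fin n) ℂ), A.PosDef → B.PosDef →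
    MLE A B → MLE (cfc f A) (cfc f B)

/-- `f` is operator monotone decreasing: order reversing on positive definite
matrices of every size, via the continuous functional calculus. -/
def OperatorAntitone (f : ℝ → ℝ) : Prop :=
  ∀ (n : ℕ) (A B : Matrix (Fin n) (Fin n) ℂ), A.PosDef → B.PosDef →
    MLE A B → MLE (cfc f B) (cfc f A)

/-!
With `g x = f x⁻¹`, the inequality `f(A !_t B) ≤ f(A) #_t f(B)` becomes the operator logarithmic
convexity `g(A ∇_t B) ≤ g(A) #_t g(B)` of `g`, and `f` is operator monotone exactly when `g` is
operator antitone. For continuous positive `g` these two properties of `g` are equivalent.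

If `g` is operator antitone, then `1 / g` is operator monotone, hence operator concave (rotate
`diag(X, Y)` so that `(1-t)X + tY` becomes its upper left corner, and bound the rotated matrix by a
block diagonal one). Inverting, `g(A ∇_t B) ≤ g(A) !_t g(B) ≤ g(A) #_t g(B)`.

Conversely, let `g` be operator logarithmically convex. If `A ≤ B`, then `B = A ∇_t F` with
`F = A + t⁻¹(B - A)`, so `g(B) ≤ (1-t) g(A) + t g(F)`, and `t → 0` gives `g(B) ≤ g(A)` as soon as
`g(F)` stays bounded. For this it suffices that `g x ≤ 6 * g a` whenever `a < x`, which is a scalar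
consequence of logarithmic convexity at pairs of `2 × 2` matrices with eigenvalues `a` and `b`.
-/

open scoped MatrixOrder
open Filter Topology

section FunctionalCalculus

variable {ι : Type*} [Fintype ι] [DecidableEq ι] {A : Matrix ι ι ℂ}

lemma continuousOn_spectrum_real (f : ℝ → ℝ) (A : Matrix ι ι ℂ) :
    ContinuousOn f (spectrum ℝ A) :=
  (Set.toFinite _).continuousOn f

lemma pos_of_mem_spectrum (hA : A.PosDef) {x : ℝ} (hx : x ∈ spectrum ℝ A) : 0 < x := by
  obtain ⟨i, rfl⟩ := hA.1.spectrum_real_eq_range_eigenvalues ▸ hx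
  exact hA.eigenvalues_pos i

lemma posDef_cfc (hA : A.PosDef) {f : ℝ → ℝ} (hf : ∀ x, 0 < x → 0 < f x) :
    (cfc f A).PosDef := by
  rw [← Matrix.isStrictlyPositive_iff_posDef]
  exact (cfc_isStrictlyPositive_iff f A (continuousOn_spectrum_real f A) hA.1).2
    fun x hx => hf x (pos_of_mem_spectrum hA hx)

lemma inv_cfc (hA : A.PosDef) {f : ℝ → ℝ} (hf : ∀ x, 0 < x → f x ≠ 0) :
    (cfc f A)⁻¹ = cfc (fun x => (f x)⁻¹) A := by
  have hA' : IsSelfAdjoint A := hA.1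
  apply Matrix.inv_eq_right_inv
  rw [← cfc_mul f _ A (continuousOn_spectrum_real _ _) (continuousOn_spectrum_real _ _),
    ← cfc_one ℝ A]
  exact cfc_congr fun x hx => mul_inv_cancel₀ (hf x (pos_of_mem_spectrum hA hx))

lemma inv_eq_cfc (hA : A.PosDef) : A⁻¹ = cfc (fun x : ℝ => x⁻¹) A := by
  have hA' : IsSelfAdjoint A := hA.1
  conv_lhs => rw [← cfc_id' ℝ A]
  exact inv_cfc hA fun _ hx => hx.ne'

lemma cfc_cfc (hA : A.IsHermitian) (f g : ℝ → ℝ) :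
    cfc g (cfc f A) = cfc (fun x => g (f x)) A :=
  (cfc_comp' g f A (((Set.toFinite _).image f).continuousOn g) (continuousOn_spectrum_real f A)
    hA).symm

lemma cfc_inv_eq_cfc_comp_inv (hA : A.PosDef) (f : ℝ → ℝ) :
    cfc f A⁻¹ = cfc (fun x => f x⁻¹) A := by
  rw [inv_eq_cfc hA, cfc_cfc hA.1]

lemma cfc_comp_inv_inv (hA : A.PosDef) (f : ℝ → ℝ) :
    cfc (fun x => f x⁻¹) A⁻¹ = cfc f A := by
  simp only [cfc_inv_eq_cfc_comp_inv hA, inv_inv]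

lemma cfc_smul_eq_cfc_comp_mul (hA : A.IsHermitian) (c : ℝ) (f : ℝ → ℝ) :
    cfc f (c • A) = cfc (fun x => f (c * x)) A :=
  (cfc_comp_const_mul c f A (((Set.toFinite _).image _).continuousOn f) hA).symm

lemma tendsto_cfc_of_tendsto_pointwise {α : Type*} {l : Filter α} {F : α → ℝ → ℝ} {f : ℝ → ℝ}
    (hA : A.PosDef) (h : ∀ x, 0 < x → Tendsto (fun a => F a x) l (𝓝 (f x))) :
    Tendsto (fun a => cfc (F a) A) l (𝓝 (cfc f A)) := by
  simp only [hA.1.cfc_eq, IsHermitian.cfc, Unitary.conjStarAlgAut_apply]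
  refine (Tendsto.mul tendsto_const_nhds ?_).mul tendsto_const_nhds
  refine ((continuous_id.matrix_diagonal).tendsto _).comp (tendsto_pi_nhds.2 fun i => ?_)
  exact (Complex.continuous_ofReal.tendsto _).comp (h _ (hA.eigenvalues_pos i))

end FunctionalCalculus

section LoewnerOrder

variable {ι : Type*} {A B : Matrix ι ι ℂ}

lemma mle_iff_le {n : ℕ} {A B : Matrix (Fin n) (Fin n) ℂ} : MLE A B ↔ A ≤ B := Iff.rfl

lemma posDef_of_posDef_of_le (hA : A.PosDef) (h : A ≤ B) : B.PosDef := by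
  simpa using hA.add_posSemidef (Matrix.le_iff.1 h)

lemma posDef_convexCombination (hA : A.PosDef) (hB : B.PosDef) {t : ℝ}
    (ht : t ∈ Set.Icc (0 : ℝ) 1) : ((1 - t) • A + t • B).PosDef := by
  rcases ht.2.eq_or_lt with rfl | ht1
  · simpa using hB
  · exact (hA.smul (sub_pos.2 ht1)).add_posSemidef (hB.posSemidef.smul ht.1)

-- Through the L2 operator norm, which makes matrices a C⋆-algebra with the same topology.
instance orderClosedTopology_matrix [Finite ι] : OrderClosedTopology (Matrix ι ι ℂ) :=
  open scoped Matrix.Norms.L2Operator Classical in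
  have := Fintype.ofFinite ι
  have l2 : OrderClosedTopology (Matrix ι ι ℂ) := inferInstance
  l2

open scoped Matrix.Norms.L2Operator in
lemma exists_pos_smul_one_le [Finite ι] [DecidableEq ι] (hA : A.PosDef) :
    ∃ α : ℝ, 0 < α ∧ α • (1 : Matrix ι ι ℂ) ≤ A := by
  have := Fintype.ofFinite ι
  rcases isEmpty_or_nonempty ι with hι | hι
  · exact ⟨1, one_pos, (Subsingleton.elim _ _).le⟩
  · simp_rw [← Algebra.algebraMap_eq_smul_one]
    exact (CFC.exists_pos_algebraMap_le_iff hA.1).2 fun x hx => pos_of_mem_spectrum hA hx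

lemma posDef_conjugate [Fintype ι] (hA : A.PosDef) (hB : B.PosDef) : (A * B * A).PosDef := by
  classical
  have h := (Matrix.IsUnit.posDef_star_right_conjugate_iff (x := B) hA.isUnit).2 hB
  rwa [star_eq_conjTranspose, hA.1.eq] at h

variable [Fintype ι] [DecidableEq ι]

lemma inv_inv_of_posDef (hA : A.PosDef) : A⁻¹⁻¹ = A :=
  nonsing_inv_nonsing_inv A ((isUnit_iff_isUnit_det A).1 hA.isUnit)

open scoped Matrix.Norms.L2Operator in
lemma inv_le_inv_of_posDef (hA : A.PosDef) (h : A ≤ B) : B⁻¹ ≤ A⁻¹ := by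
  simp only [nonsing_inv_eq_ringInverse]
  exact CStarAlgebra.ringInverse_le_ringInverse h (Matrix.isStrictlyPositive_iff_posDef.2 hA)

end LoewnerOrder

section Means

variable {n : ℕ} {P Q : Matrix (Fin n) (Fin n) ℂ} {t : ℝ}

lemma posDef_mpow (hP : P.PosDef) (r : ℝ) : (mpow P r).PosDef :=
  posDef_cfc hP fun _ hx => Real.rpow_pos_of_pos hx r

lemma mpow_add (hP : P.PosDef) (r s : ℝ) : mpow P (r + s) = mpow P r * mpow P s := by
  unfold mpow
  rw [← cfc_mul _ _ P (continuousOn_spectrum_real _ _) (continuousOn_spectrum_real _ _)]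
  exact cfc_congr fun x hx => Real.rpow_add (pos_of_mem_spectrum hP hx) r s

lemma mpow_zero (hP : P.PosDef) : mpow P 0 = 1 := by
  simp only [mpow, Real.rpow_zero]
  exact cfc_const_one ℝ P hP.1

lemma mpow_one (hP : P.PosDef) : mpow P 1 = P := by
  simp only [mpow, Real.rpow_one]
  exact cfc_id' ℝ P hP.1

lemma mpow_mul_mpow_neg (hP : P.PosDef) (r : ℝ) : mpow P r * mpow P (-r) = 1 := by
  rw [← mpow_add hP, add_neg_cancel, mpow_zero hP]

lemma mpow_half_mul_mpow_half (hP : P.PosDef) : mpow P (1 / 2) * mpow P (1 / 2) = P := by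
  rw [← mpow_add hP, add_halves, mpow_one hP]

lemma inv_mpow (hP : P.PosDef) (r : ℝ) : (mpow P r)⁻¹ = mpow P⁻¹ r := by
  unfold mpow
  rw [inv_cfc hP fun x hx => (Real.rpow_pos_of_pos hx r).ne', cfc_inv_eq_cfc_comp_inv hP]
  exact cfc_congr fun x hx => (Real.inv_rpow (pos_of_mem_spectrum hP hx).le r).symm

lemma mpow_half_mul_self (hP : P.PosDef) : mpow (P * P) (1 / 2) = P := by
  have hP' : IsSelfAdjoint P := hP.1
  have sq_eq_cfc : P * P = cfc (fun x : ℝ => x * x) P := by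
    rw [cfc_mul _ _ P (continuousOn_spectrum_real _ _) (continuousOn_spectrum_real _ _),
      cfc_id' ℝ P]
  rw [sq_eq_cfc, mpow, cfc_cfc hP.1]
  conv_rhs => rw [← cfc_id' ℝ P]
  refine cfc_congr fun x hx => ?_
  simp only [← Real.sqrt_eq_rpow, Real.sqrt_mul_self (pos_of_mem_spectrum hP hx).le]

lemma mpow_half_conjugate_mpow_neg_half (hP : P.PosDef) (Q : Matrix (Fin n) (Fin n) ℂ) :
    mpow P (1 / 2) * (mpow P (-(1 / 2)) * Q * mpow P (-(1 / 2))) * mpow P (1 / 2) = Q := by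
  have right_inv := mpow_mul_mpow_neg hP (1 / 2)
  have left_inv := mul_eq_one_comm.1 right_inv
  calc _ = (mpow P (1 / 2) * mpow P (-(1 / 2))) * Q * (mpow P (-(1 / 2)) * mpow P (1 / 2)) := by
        noncomm_ring
    _ = Q := by rw [right_inv, left_inv, one_mul, mul_one]

lemma posDef_wgeom (hP : P.PosDef) (hQ : Q.PosDef) (t : ℝ) : (wgeom t P Q).PosDef :=
  posDef_conjugate (posDef_mpow hP _)
    (posDef_mpow (posDef_conjugate (posDef_mpow hP _) hQ) t)

lemma inv_wgeom (hP : P.PosDef) (hQ : Q.PosDef) (t : ℝ) :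
    (wgeom t P Q)⁻¹ = wgeom t P⁻¹ Q⁻¹ := by
  have hZ := posDef_conjugate (posDef_mpow hP (-(1 / 2))) hQ
  simp only [wgeom, Matrix.mul_inv_rev, inv_mpow hZ, inv_mpow hP, ← Matrix.mul_assoc]

lemma mpow_le_one_sub_smul_one_add_smul (hP : P.PosDef) (ht : t ∈ Set.Icc (0 : ℝ) 1) :
    mpow P t ≤ (1 - t) • 1 + t • P := by
  have hP' : IsSelfAdjoint P := hP.1
  have affine_eq_cfc : (1 - t) • 1 + t • P = cfc (fun x : ℝ => (1 - t) + t * x) P := by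
    rw [cfc_const_add (1 - t) _ P (continuousOn_spectrum_real _ _), cfc_const_mul_id t P,
      Algebra.algebraMap_eq_smul_one]
  rw [affine_eq_cfc]
  refine cfc_mono (fun x hx => ?_) (continuousOn_spectrum_real _ _) (continuousOn_spectrum_real _ _)
  simpa using Real.geom_mean_le_arith_mean2_weighted (sub_nonneg.2 ht.2) ht.1 zero_le_one
    (pos_of_mem_spectrum hP hx).le (sub_add_cancel 1 t)

lemma wgeom_le_warith (hP : P.PosDef) (hQ : Q.PosDef) (ht : t ∈ Set.Icc (0 : ℝ) 1) :
    wgeom t P Q ≤ warith t P Q := by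
  have hZ := posDef_conjugate (posDef_mpow hP (-(1 / 2))) hQ
  calc wgeom t P Q
      ≤ mpow P (1 / 2) * ((1 - t) • 1 + t • (mpow P (-(1 / 2)) * Q * mpow P (-(1 / 2)))) *
          mpow P (1 / 2) :=
        (posDef_mpow hP _).1.isSelfAdjoint.conjugate_le_conjugate
          (mpow_le_one_sub_smul_one_add_smul hZ ht)
    _ = warith t P Q := by
      rw [mul_add, add_mul, mul_smul_comm, mul_smul_comm, smul_mul_assoc, smul_mul_assoc, mul_one,
        mpow_half_mul_mpow_half hP, mpow_half_conjugate_mpow_neg_half hP, warith]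

lemma wharm_le_wgeom (hP : P.PosDef) (hQ : Q.PosDef) (ht : t ∈ Set.Icc (0 : ℝ) 1) :
    wharm t P Q ≤ wgeom t P Q := by
  rw [← inv_inv_of_posDef (posDef_wgeom hP hQ t), inv_wgeom hP hQ]
  exact inv_le_inv_of_posDef (posDef_wgeom hP.inv hQ.inv t) (wgeom_le_warith hP.inv hQ.inv ht)

lemma wgeom_half_eq_of_mul_inv_mul_eq {G : Matrix (Fin n) (Fin n) ℂ} (hP : P.PosDef)
    (hG : G.PosDef) (h : G * P⁻¹ * G = Q) : wgeom (1 / 2) P Q = G := by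
  have inv_eq : P⁻¹ = mpow P (-(1 / 2)) * mpow P (-(1 / 2)) := by
    conv_lhs => rw [← mpow_half_mul_mpow_half hP, Matrix.mul_inv_rev,
      Matrix.inv_eq_right_inv (mpow_mul_mpow_neg hP _)]
  have square_eq : mpow P (-(1 / 2)) * Q * mpow P (-(1 / 2)) =
      (mpow P (-(1 / 2)) * G * mpow P (-(1 / 2))) *
        (mpow P (-(1 / 2)) * G * mpow P (-(1 / 2))) := by
    rw [← h, inv_eq]
    noncomm_ring
  rw [wgeom, square_eq, mpow_half_mul_self (posDef_conjugate (posDef_mpow hP _) hG),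
    mpow_half_conjugate_mpow_neg_half hP]

end Means

section Blocks

open Polynomial

variable {ι κ : Type*}

lemma posDef_fromBlocks_diagonal [Finite ι] [Finite κ] {X : Matrix ι ι ℂ} {Y : Matrix κ κ ℂ}
    (hX : X.PosDef) (hY : Y.PosDef) : (fromBlocks X 0 0 Y).PosDef := by
  classical
  have := Fintype.ofFinite ι
  have := Fintype.ofFinite κ
  have posSemidef : (fromBlocks X 0 0 Y).PosSemidef := by
    have : Invertible X := hX.isUnit.invertible
    simpa using (PosDef.fromBlocks₁₁ (0 : Matrix ι κ ℂ) Y hX).2 (by simpa using hY.posSemidef)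
  rw [posSemidef.posDef_iff_det_ne_zero, det_fromBlocks_zero₂₁]
  exact mul_ne_zero hX.det_pos.ne' hY.det_pos.ne'

-- The difference of the two sides is `J * M * J`, where `M` is the given block matrix and
-- `J = diag(δ, -δ⁻¹)`.
lemma fromBlocks_le_fromBlocks_diagonal [Finite ι] [Finite κ] {T : Matrix ι ι ℂ}
    {B : Matrix ι κ ℂ} {C : Matrix κ ι ℂ} {W : Matrix κ κ ℂ}
    (hM : (fromBlocks T B C W).PosSemidef) {δ : ℝ} (hδ : δ ≠ 0) :
    fromBlocks T B C W ≤ fromBlocks ((1 + δ ^ 2) • T) 0 0 ((1 + (δ ^ 2)⁻¹) • W) := by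
  classical
  have := Fintype.ofFinite ι
  have := Fintype.ofFinite κ
  let J : Matrix (ι ⊕ κ) (ι ⊕ κ) ℂ := fromBlocks (δ • 1) 0 0 (-(δ⁻¹ • 1))
  have hJ : J.IsHermitian := by simp [J, IsHermitian, fromBlocks_conjTranspose]
  have difference_eq : fromBlocks ((1 + δ ^ 2) • T) 0 0 ((1 + (δ ^ 2)⁻¹) • W) -
      fromBlocks T B C W = J * fromBlocks T B C W * J := by
    simp only [J, sub_eq_add_neg, fromBlocks_neg, fromBlocks_add, fromBlocks_multiply,
      Matrix.smul_mul, Matrix.mul_smul, Matrix.one_mul, Matrix.mul_one, Matrix.zero_mul,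
      Matrix.mul_zero, Matrix.neg_mul, Matrix.mul_neg, add_zero, zero_add, smul_neg, neg_neg,
      smul_smul, mul_inv_cancel₀ hδ, inv_mul_cancel₀ hδ, one_smul]
    congr 1 <;> module
  rw [Matrix.le_iff, difference_eq]
  simpa only [hJ.eq] using hM.mul_mul_conjTranspose_same J

variable [Fintype ι] [DecidableEq ι] [Fintype κ] [DecidableEq κ]

lemma exists_polynomial_eval_eq (f : ℝ → ℝ) {S : Set ℝ} (hS : S.Finite) :
    ∃ p : ℝ[X], ∀ x ∈ S, p.eval x = f x :=
  ⟨Lagrange.interpolate hS.toFinset id f, fun _ hx =>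
    Lagrange.eval_interpolate_at_node f Function.injective_id.injOn (hS.mem_toFinset.2 hx)⟩

lemma cfc_eq_aeval {A : Matrix ι ι ℂ} (hA : A.IsHermitian) {f : ℝ → ℝ} {p : ℝ[X]}
    (h : ∀ x ∈ spectrum ℝ A, p.eval x = f x) : cfc f A = aeval A p := by
  rw [← cfc_polynomial p A hA]
  exact cfc_congr fun x hx => (h x hx).symm

lemma cfc_algHom_apply (φ : Matrix ι ι ℂ →ₐ[ℝ] Matrix κ κ ℂ) {A : Matrix ι ι ℂ}
    (hA : A.IsHermitian) (hφA : (φ A).IsHermitian) (f : ℝ → ℝ) :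
    cfc f (φ A) = φ (cfc f A) := by
  obtain ⟨p, hp⟩ := exists_polynomial_eval_eq f
    ((spectrum ℝ A).toFinite.union (spectrum ℝ (φ A)).toFinite)
  rw [cfc_eq_aeval hA fun x hx => hp x (.inl hx), cfc_eq_aeval hφA fun x hx => hp x (.inr hx),
    aeval_algHom_apply]

lemma cfc_unitary_conjugate {U : Matrix ι ι ℂ} (hU : U ∈ unitary (Matrix ι ι ℂ))
    {A : Matrix ι ι ℂ} (hA : A.IsHermitian) (f : ℝ → ℝ) :
    cfc f (U * A * Uᴴ) = U * cfc f A * Uᴴ :=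
  cfc_algHom_apply (Unitary.conjStarAlgAut ℝ _ ⟨U, hU⟩ : Matrix ι ι ℂ →ₐ[ℝ] Matrix ι ι ℂ) hA
    (isHermitian_mul_mul_conjTranspose U hA) f

lemma cfc_reindex (e : ι ≃ κ) {A : Matrix ι ι ℂ} (hA : A.IsHermitian) (f : ℝ → ℝ) :
    cfc f (reindex e e A) = reindex e e (cfc f A) :=
  cfc_algHom_apply (reindexAlgEquiv ℝ ℂ e).toAlgHom hA (hA.submatrix e.symm) f

lemma aeval_fromBlocks_diagonal (X : Matrix ι ι ℂ) (Y : Matrix κ κ ℂ) (p : ℝ[X]) :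
    aeval (fromBlocks X 0 0 Y) p = fromBlocks (aeval X p) 0 0 (aeval Y p) := by
  induction p using Polynomial.induction_on' with
  | add p q hp hq => simp only [map_add, hp, hq, fromBlocks_add, add_zero]
  | monomial k a =>
    simp only [aeval_monomial, fromBlocks_diagonal_pow, ← Algebra.smul_def, fromBlocks_smul,
      smul_zero]

lemma cfc_fromBlocks_diagonal {X : Matrix ι ι ℂ} {Y : Matrix κ κ ℂ} (hX : X.IsHermitian)
    (hY : Y.IsHermitian) (f : ℝ → ℝ) :
    cfc f (fromBlocks X 0 0 Y) = fromBlocks (cfc f X) 0 0 (cfc f Y) := by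
  have hXY : (fromBlocks X 0 0 Y).IsHermitian := hX.fromBlocks conjTranspose_zero hY
  obtain ⟨p, hp⟩ := exists_polynomial_eval_eq f
    ((spectrum ℝ X).toFinite.union ((spectrum ℝ Y).toFinite.union
      (spectrum ℝ (fromBlocks X 0 0 Y)).toFinite))
  rw [cfc_eq_aeval hX fun x hx => hp x (.inl hx), cfc_eq_aeval hY fun x hx => hp x (.inr (.inl hx)),
    cfc_eq_aeval hXY fun x hx => hp x (.inr (.inr hx)), aeval_fromBlocks_diagonal]

/-- The block rotation `[[√(1-t), √t], [-√t, √(1-t)]]`. Conjugating `diag(X, Y)` by it puts the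
convex combination `(1-t)X + tY` into the upper left corner. -/
noncomputable def blockRotation (ι : Type*) [DecidableEq ι] (t : ℝ) :
    Matrix (ι ⊕ ι) (ι ⊕ ι) ℂ :=
  fromBlocks (√(1 - t) • 1) (√t • 1) (-(√t • 1)) (√(1 - t) • 1)

lemma blockRotation_conjugate_fromBlocks {t : ℝ} (ht : t ∈ Set.Icc (0 : ℝ) 1)
    (X Y : Matrix ι ι ℂ) :
    blockRotation ι t * fromBlocks X 0 0 Y * (blockRotation ι t)ᴴ =
      fromBlocks ((1 - t) • X + t • Y) ((√(1 - t) * √t) • (Y - X)) ((√(1 - t) * √t) • (Y - X))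
        (t • X + (1 - t) • Y) := by
  have hc : 1 - t = √(1 - t) * √(1 - t) := (Real.mul_self_sqrt (sub_nonneg.2 ht.2)).symm
  have hs : t = √t * √t := (Real.mul_self_sqrt ht.1).symm
  simp only [blockRotation, fromBlocks_conjTranspose, fromBlocks_multiply, conjTranspose_neg,
    conjTranspose_smul, conjTranspose_one, star_trivial, mul_zero, add_zero, zero_add,
    smul_mul_assoc, mul_smul_comm, one_mul, mul_one, neg_mul, mul_neg, smul_neg]
  generalize √(1 - t) = c at *
  generalize √t = s at *
  congr 1
  · rw [hc, hs]; module
  · module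
  · module
  · rw [hc, hs]; module

lemma blockRotation_mem_unitary {t : ℝ} (ht : t ∈ Set.Icc (0 : ℝ) 1) :
    blockRotation ι t ∈ unitary (Matrix (ι ⊕ ι) (ι ⊕ ι) ℂ) := by
  have mul_star : blockRotation ι t * (blockRotation ι t)ᴴ = 1 := by
    have h := blockRotation_conjugate_fromBlocks ht (1 : Matrix ι ι ℂ) 1
    rwa [fromBlocks_one, mul_one, sub_self, smul_zero, ← add_smul, ← add_smul, sub_add_cancel,
      add_sub_cancel, one_smul, fromBlocks_one] at h
  exact Unitary.mem_iff.2 ⟨mul_eq_one_comm.1 mul_star, mul_star⟩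

end Blocks

namespace OperatorMonotone

variable {ι : Type*} [Fintype ι] [DecidableEq ι] {f : ℝ → ℝ} {X Y : Matrix ι ι ℂ} {t : ℝ}

lemma cfc_le_cfc (hf : OperatorMonotone f) (hX : X.PosDef) (hY : Y.PosDef) (h : X ≤ Y) :
    cfc f X ≤ cfc f Y := by
  let e := Fintype.equivFin ι
  have reindexed_le : MLE (cfc f (reindex e e X)) (cfc f (reindex e e Y)) :=
    hf _ _ _ (hX.submatrix e.symm.injective) (hY.submatrix e.symm.injective)
      (PosSemidef.submatrix h e.symm)
  rw [cfc_reindex e hX.1, cfc_reindex e hY.1] at reindexed_le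
  simpa [Matrix.le_iff, submatrix_sub] using PosSemidef.submatrix reindexed_le e

lemma convexCombination_le_cfc_smul (hf : OperatorMonotone f) (hX : X.PosDef) (hY : Y.PosDef)
    (ht : t ∈ Set.Icc (0 : ℝ) 1) {δ : ℝ} (hδ : δ ≠ 0) :
    (1 - t) • cfc f X + t • cfc f Y ≤ cfc f ((1 + δ ^ 2) • ((1 - t) • X + t • Y)) := by
  have hV := blockRotation_mem_unitary (ι := ι) ht
  have hZ := posDef_fromBlocks_diagonal hX hY
  have hM : (blockRotation ι t * fromBlocks X 0 0 Y * (blockRotation ι t)ᴴ).PosDef :=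
    (IsUnit.posDef_star_right_conjugate_iff (Unitary.isUnit_coe (U := ⟨_, hV⟩))).2 hZ
  have hT : ((1 + δ ^ 2) • ((1 - t) • X + t • Y)).PosDef :=
    (posDef_convexCombination hX hY ht).smul (by positivity)
  have hW : ((1 + (δ ^ 2)⁻¹) • (t • X + (1 - t) • Y)).PosDef := by
    rw [add_comm (t • X)]
    exact (posDef_convexCombination hY hX ht).smul (by positivity)
  have block_le : blockRotation ι t * fromBlocks X 0 0 Y * (blockRotation ι t)ᴴ ≤
      fromBlocks ((1 + δ ^ 2) • ((1 - t) • X + t • Y)) 0 0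
        ((1 + (δ ^ 2)⁻¹) • (t • X + (1 - t) • Y)) := by
    rw [blockRotation_conjugate_fromBlocks ht] at hM ⊢
    exact fromBlocks_le_fromBlocks_diagonal hM.posSemidef hδ
  have cfc_le := hf.cfc_le_cfc hM (posDef_fromBlocks_diagonal hT hW) block_le
  rw [cfc_unitary_conjugate hV hZ.1, cfc_fromBlocks_diagonal hX.1 hY.1,
    cfc_fromBlocks_diagonal hT.1 hW.1, blockRotation_conjugate_fromBlocks ht] at cfc_le
  exact PosSemidef.submatrix cfc_le Sum.inl

theorem convexCombination_le_cfc (hf : OperatorMonotone f) (hf_cont : ContinuousOn f (Set.Ioi 0))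
    (hX : X.PosDef) (hY : Y.PosDef) (ht : t ∈ Set.Icc (0 : ℝ) 1) :
    (1 - t) • cfc f X + t • cfc f Y ≤ cfc f ((1 - t) • X + t • Y) := by
  set T := (1 - t) • X + t • Y
  have hT : T.PosDef := posDef_convexCombination hX hY ht
  have scaled_tendsto : Tendsto (fun δ : ℝ => cfc (fun x => f ((1 + δ ^ 2) * x)) T) (𝓝[≠] 0)
      (𝓝 (cfc f T)) := by
    refine tendsto_cfc_of_tendsto_pointwise hT fun x hx => ?_
    have arg_tendsto : Tendsto (fun δ : ℝ => (1 + δ ^ 2) * x) (𝓝 0) (𝓝 x) :=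
      Continuous.tendsto' (by fun_prop) _ _ (by simp)
    exact ((hf_cont.continuousAt (Ioi_mem_nhds hx)).tendsto.comp arg_tendsto).mono_left
      nhdsWithin_le_nhds
  refine ge_of_tendsto scaled_tendsto (eventually_nhdsWithin_of_forall fun δ hδ => ?_)
  rw [← cfc_smul_eq_cfc_comp_mul hT.1]
  exact hf.convexCombination_le_cfc_smul hX hY ht hδ

end OperatorMonotone

section Projections

variable {ι : Type*} [Fintype ι] [DecidableEq ι] {P : Matrix ι ι ℂ}

lemma smul_one_sub_add_smul_eq_cfc (hP : P.IsHermitian) (a b : ℝ) :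
    a • (1 - P) + b • P = cfc (fun x : ℝ => a + (b - a) * x) P := by
  have hP' : IsSelfAdjoint P := hP
  rw [cfc_const_add a _ P (continuousOn_spectrum_real _ _), cfc_const_mul_id (b - a) P,
    Algebra.algebraMap_eq_smul_one]
  module

lemma cfc_smul_one_sub_add_smul (hP : IsStarProjection P) (a b : ℝ) (f : ℝ → ℝ) :
    cfc f (a • (1 - P) + b • P) = f a • (1 - P) + f b • P := by
  rw [smul_one_sub_add_smul_eq_cfc hP.isSelfAdjoint, smul_one_sub_add_smul_eq_cfc hP.isSelfAdjoint,
    cfc_cfc hP.isSelfAdjoint]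
  refine cfc_congr fun x hx => ?_
  rcases hP.isIdempotentElem.spectrum_subset ℝ hx with rfl | rfl <;> simp

lemma posDef_smul_one_sub_add_smul (hP : IsStarProjection P) {a b : ℝ} (ha : 0 < a) (hb : 0 < b) :
    (a • (1 - P) + b • P).PosDef := by
  rw [smul_one_sub_add_smul_eq_cfc hP.isSelfAdjoint, ← Matrix.isStrictlyPositive_iff_posDef]
  refine (cfc_isStrictlyPositive_iff _ P (continuousOn_spectrum_real _ _) hP.isSelfAdjoint).2
    fun x hx => ?_
  rcases hP.isIdempotentElem.spectrum_subset ℝ hx with rfl | rfl <;> simpa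

/-- The orthogonal projection of `ℂ²` onto the line spanned by `(c, s)`, where `c ^ 2 + s ^ 2 = 1`.
The pairs of projections for `s` and `-s` give the test matrices to which logarithmic convexity is
applied. -/
def lineProjection (c s : ℝ) : Matrix (Fin 2) (Fin 2) ℂ :=
  !![(c : ℂ) ^ 2, c * s; c * s, (s : ℂ) ^ 2]

lemma isStarProjection_lineProjection {c s : ℝ} (h : c ^ 2 + s ^ 2 = 1) :
    IsStarProjection (lineProjection c s) := by
  have h' : (c : ℂ) ^ 2 + (s : ℂ) ^ 2 = 1 := mod_cast h
  refine ⟨?_, ?_⟩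
  · rw [IsIdempotentElem, lineProjection, mul_fin_two]
    congrm !![?_, ?_; ?_, ?_]
    · linear_combination (c : ℂ) ^ 2 * h'
    · linear_combination (c * s : ℂ) * h'
    · linear_combination (c * s : ℂ) * h'
    · linear_combination (s : ℂ) ^ 2 * h'
  · ext i j
    fin_cases i <;> fin_cases j <;> simp [lineProjection]

lemma smul_one_sub_lineProjection_add_smul {c s : ℝ} (h : c ^ 2 + s ^ 2 = 1) (a b : ℝ) :
    a • (1 - lineProjection c s) + b • lineProjection c s =
      !![((a * s ^ 2 + b * c ^ 2 : ℝ) : ℂ), (((b - a) * (c * s) : ℝ) : ℂ);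
        (((b - a) * (c * s) : ℝ) : ℂ), ((a * c ^ 2 + b * s ^ 2 : ℝ) : ℂ)] := by
  have h' : (c : ℂ) ^ 2 + (s : ℂ) ^ 2 = 1 := mod_cast h
  simp only [lineProjection, one_fin_two, of_sub_of, of_add_of, smul_of, sub_cons, add_cons,
    smul_cons, head_cons, tail_cons, sub_self, Complex.real_smul, smul_empty, empty_add_empty]
  push_cast
  congrm !![?_, ?_; ?_, ?_]
  · linear_combination (-(a : ℂ)) * h'
  · ring
  · ring
  · linear_combination (-(a : ℂ)) * h'

lemma wgeom_half_fin_two {p q w u v : ℝ}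
    (hM : (!![(p : ℂ), (q : ℂ); (q : ℂ), (w : ℂ)] : Matrix (Fin 2) (Fin 2) ℂ).PosDef)
    (hu : 0 < u) (hv : 0 < v) (huv : u * v = p * w - q ^ 2) (hratio : u * w = v * p) :
    wgeom (1 / 2) !![(p : ℂ), (q : ℂ); (q : ℂ), (w : ℂ)] !![(p : ℂ), -(q : ℂ); -(q : ℂ), (w : ℂ)] =
      !![(u : ℂ), 0; 0, (v : ℂ)] := by
  have hG : (!![(u : ℂ), 0; 0, (v : ℂ)]).PosDef := by
    simpa [diagonal_fin_two] using
      PosDef.diagonal (d := ![(u : ℂ), (v : ℂ)]) (by simp [Fin.forall_fin_two, hu, hv])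
  have hu0 : (u : ℂ) ≠ 0 := mod_cast hu.ne'
  have hv0 : (v : ℂ) ≠ 0 := mod_cast hv.ne'
  have det_eq : (p * w - q * q : ℂ) = u * v := mod_cast by rw [huv, sq]
  have hratio' : (u * w : ℂ) = v * p := mod_cast hratio
  refine wgeom_half_eq_of_mul_inv_mul_eq hM hG ?_
  rw [inv_def, det_fin_two_of, adjugate_fin_two_of, Ring.inverse_eq_inv', det_eq, mul_smul_comm,
    smul_mul_assoc, mul_fin_two, mul_fin_two]
  simp only [smul_of, smul_cons, smul_empty, smul_eq_mul, zero_mul, mul_zero, add_zero, zero_add]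
  congrm !![?_, ?_; ?_, ?_] <;> field_simp
  · exact hratio'
  · exact hratio'.symm

lemma mul_sq_add_mul_sq_pos {a b c s : ℝ} (ha : 0 < a) (hb : 0 < b) (hcs : c ^ 2 + s ^ 2 = 1) :
    0 < a * s ^ 2 + b * c ^ 2 := by
  have h : 0 < min a b * (s ^ 2 + c ^ 2) := by
    rw [add_comm, hcs, mul_one]
    exact lt_min ha hb
  nlinarith [min_le_left a b, min_le_right a b, sq_nonneg s, sq_nonneg c]

lemma warith_half_lineProjection {c s : ℝ} (hcs : c ^ 2 + s ^ 2 = 1) (a b : ℝ) :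
    warith (1 / 2) (a • (1 - lineProjection c s) + b • lineProjection c s)
        (a • (1 - lineProjection c (-s)) + b • lineProjection c (-s)) =
      (a * c ^ 2 + b * s ^ 2) • (1 - lineProjection 1 0) +
        (a * s ^ 2 + b * c ^ 2) • lineProjection 1 0 := by
  rw [smul_one_sub_lineProjection_add_smul hcs, smul_one_sub_lineProjection_add_smul (by simpa),
    smul_one_sub_lineProjection_add_smul (by simp), warith]
  simp only [of_add_of, smul_of, add_cons, smul_cons, head_cons, tail_cons, Complex.real_smul,
    smul_empty, empty_add_empty]
  push_cast
  congrm !![?_, ?_; ?_, ?_] <;> ring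

lemma wgeom_half_lineProjection_apply_zero {a b c s : ℝ} (ha : 0 < a) (hb : 0 < b)
    (hcs : c ^ 2 + s ^ 2 = 1) :
    wgeom (1 / 2) (a • (1 - lineProjection c s) + b • lineProjection c s)
        (a • (1 - lineProjection c (-s)) + b • lineProjection c (-s)) 0 0 =
      (√(a * b * ((a * s ^ 2 + b * c ^ 2) / (a * c ^ 2 + b * s ^ 2))) : ℝ) := by
  have hM := posDef_smul_one_sub_add_smul (isStarProjection_lineProjection hcs) ha hb
  have hp := mul_sq_add_mul_sq_pos ha hb hcs
  have hw := mul_sq_add_mul_sq_pos ha hb ((add_comm _ _).trans hcs)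
  rw [smul_one_sub_lineProjection_add_smul hcs] at hM ⊢
  rw [smul_one_sub_lineProjection_add_smul (by simpa)]
  simp only [mul_neg, neg_sq, Complex.ofReal_neg]
  have hdet : (a * s ^ 2 + b * c ^ 2) * (a * c ^ 2 + b * s ^ 2) - ((b - a) * (c * s)) ^ 2 =
      a * b := by
    linear_combination a * b * (c ^ 2 + s ^ 2 + 1) * hcs
  set p := a * s ^ 2 + b * c ^ 2
  set w := a * c ^ 2 + b * s ^ 2
  set u := √(a * b * (p / w))
  have hu : 0 < u := Real.sqrt_pos.2 (by positivity)
  have hu_sq : u ^ 2 = a * b * (p / w) := Real.sq_sqrt (by positivity)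
  have huv : u * (u * w / p) = p * w - ((b - a) * (c * s)) ^ 2 := by
    rw [hdet, ← mul_div_assoc, ← mul_assoc, ← sq, hu_sq]
    field_simp
  rw [wgeom_half_fin_two hM hu (by positivity) huv (by field_simp)]
  simp

end Projections

/-- Operator logarithmic convexity `g(A ∇_t B) ≤ g(A) #_t g(B)` on positive definite matrices of
every size. For `g = f ∘ (·)⁻¹` it is the inequality `f(A !_t B) ≤ f(A) #_t f(B)`. -/
def OperatorLogConvex (g : ℝ → ℝ) : Prop :=
  ∀ (n : ℕ) (A B : Matrix (Fin n) (Fin n) ℂ), A.PosDef → B.PosDef →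
    ∀ t ∈ Set.Icc (0 : ℝ) 1, MLE (cfc g (warith t A B)) (wgeom t (cfc g A) (cfc g B))

namespace OperatorAntitone

variable {g : ℝ → ℝ}

lemma operatorMonotone_inv (hg : OperatorAntitone g) (hg_pos : ∀ x, 0 < x → 0 < g x) :
    OperatorMonotone fun x => (g x)⁻¹ := by
  intro n A B hA hB hAB
  have hg_ne : ∀ x, 0 < x → g x ≠ 0 := fun x hx => (hg_pos x hx).ne'
  rw [← inv_cfc hA hg_ne, ← inv_cfc hB hg_ne]
  exact inv_le_inv_of_posDef (posDef_cfc hB hg_pos) (hg n A B hA hB hAB)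

theorem operatorLogConvex (hg : OperatorAntitone g) (hg_cont : ContinuousOn g (Set.Ioi 0))
    (hg_pos : ∀ x, 0 < x → 0 < g x) : OperatorLogConvex g := by
  intro n A B hA hB t ht
  have hg_ne : ∀ x, 0 < x → g x ≠ 0 := fun x hx => (hg_pos x hx).ne'
  have hgA := posDef_cfc hA hg_pos
  have hgB := posDef_cfc hB hg_pos
  have hAB : (warith t A B).PosDef := posDef_convexCombination hA hB ht
  have inv_concave : warith t (cfc g A)⁻¹ (cfc g B)⁻¹ ≤ (cfc g (warith t A B))⁻¹ := by
    rw [inv_cfc hA hg_ne, inv_cfc hB hg_ne, inv_cfc hAB hg_ne]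
    exact (hg.operatorMonotone_inv hg_pos).convexCombination_le_cfc (hg_cont.inv₀ hg_ne) hA hB ht
  rw [mle_iff_le]
  calc cfc g (warith t A B)
      = (cfc g (warith t A B))⁻¹⁻¹ := (inv_inv_of_posDef (posDef_cfc hAB hg_pos)).symm
    _ ≤ wharm t (cfc g A) (cfc g B) :=
        inv_le_inv_of_posDef (posDef_convexCombination hgA.inv hgB.inv ht) inv_concave
    _ ≤ wgeom t (cfc g A) (cfc g B) := wharm_le_wgeom hgA hgB ht

end OperatorAntitone

namespace OperatorLogConvex

variable {g : ℝ → ℝ}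

lemma sq_le_of_sq_add_sq_eq_one (hg : OperatorLogConvex g) (hg_pos : ∀ x, 0 < x → 0 < g x)
    {a b c s : ℝ} (ha : 0 < a) (hb : 0 < b) (hcs : c ^ 2 + s ^ 2 = 1) :
    g (a * s ^ 2 + b * c ^ 2) ^ 2 ≤
      g a * g b * ((g a * s ^ 2 + g b * c ^ 2) / (g a * c ^ 2 + g b * s ^ 2)) := by
  have hP := isStarProjection_lineProjection hcs
  have hP' : IsStarProjection (lineProjection c (-s)) := isStarProjection_lineProjection (by simpa)
  have hE : IsStarProjection (lineProjection 1 0) := isStarProjection_lineProjection (by simp)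
  have matrix_le := hg 2 _ _ (posDef_smul_one_sub_add_smul hP ha hb)
    (posDef_smul_one_sub_add_smul hP' ha hb) (1 / 2) ⟨by norm_num, by norm_num⟩
  rw [warith_half_lineProjection hcs, cfc_smul_one_sub_add_smul hP,
    cfc_smul_one_sub_add_smul hP', cfc_smul_one_sub_add_smul hE] at matrix_le
  have entry_le := PosSemidef.diag_nonneg matrix_le (i := 0)
  rw [Matrix.sub_apply, wgeom_half_lineProjection_apply_zero (hg_pos a ha) (hg_pos b hb) hcs,
    smul_one_sub_lineProjection_add_smul (by simp), sub_nonneg] at entry_le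
  have le_sqrt : g (a * s ^ 2 + b * c ^ 2) ≤
      √(g a * g b * ((g a * s ^ 2 + g b * c ^ 2) / (g a * c ^ 2 + g b * s ^ 2))) := by
    simpa [-Complex.ofReal_div, -Complex.ofReal_mul] using entry_le
  exact (Real.le_sqrt' (hg_pos _ (mul_sq_add_mul_sq_pos ha hb hcs))).1 le_sqrt

lemma sq_mul_sq_le (hg : OperatorLogConvex g) (hg_pos : ∀ x, 0 < x → 0 < g x)
    {a b c s : ℝ} (ha : 0 < a) (hb : 0 < b) (hcs : c ^ 2 + s ^ 2 = 1) (hsc : s ^ 2 ≤ c ^ 2) :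
    s ^ 2 * g (a * s ^ 2 + b * c ^ 2) ^ 2 ≤ g a * g b := by
  have hga := hg_pos a ha
  have hgb := hg_pos b hb
  have hw := mul_sq_add_mul_sq_pos hga hgb ((add_comm _ _).trans hcs)
  have weight_le : s ^ 2 * ((g a * s ^ 2 + g b * c ^ 2) / (g a * c ^ 2 + g b * s ^ 2)) ≤ 1 := by
    rw [← mul_div_assoc, div_le_one hw]
    nlinarith [mul_nonneg hga.le (sq_nonneg s), mul_nonneg hgb.le (sq_nonneg s), sq_nonneg s]
  calc s ^ 2 * g (a * s ^ 2 + b * c ^ 2) ^ 2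
      ≤ s ^ 2 * (g a * g b * ((g a * s ^ 2 + g b * c ^ 2) / (g a * c ^ 2 + g b * s ^ 2))) := by
        gcongr
        exact hg.sq_le_of_sq_add_sq_eq_one hg_pos ha hb hcs
    _ = g a * g b * (s ^ 2 * ((g a * s ^ 2 + g b * c ^ 2) / (g a * c ^ 2 + g b * s ^ 2))) :=
        mul_left_comm _ _ _
    _ ≤ g a * g b := mul_le_of_le_one_right (by positivity) weight_le

lemma sub_mul_sq_le (hg : OperatorLogConvex g) (hg_pos : ∀ x, 0 < x → 0 < g x)
    {a b x : ℝ} (ha : 0 < a) (hxb : x < b) (hx : a + b ≤ 2 * x) :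
    (b - x) * g x ^ 2 ≤ (b - a) * (g a * g b) := by
  have hab : 0 < b - a := by linarith
  set c := √((x - a) / (b - a))
  set s := √((b - x) / (b - a))
  have hc_sq : c ^ 2 = (x - a) / (b - a) := Real.sq_sqrt (div_nonneg (by linarith) hab.le)
  have hs_sq : s ^ 2 = (b - x) / (b - a) := Real.sq_sqrt (div_nonneg (by linarith) hab.le)
  have hcs : c ^ 2 + s ^ 2 = 1 := by rw [hc_sq, hs_sq]; field_simp; ring
  have hsc : s ^ 2 ≤ c ^ 2 := by
    rw [hc_sq, hs_sq, div_le_div_iff_of_pos_right hab]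
    linarith
  have hx_eq : a * s ^ 2 + b * c ^ 2 = x := by rw [hc_sq, hs_sq]; field_simp; ring
  have scaled := hg.sq_mul_sq_le hg_pos ha (by linarith : 0 < b) hcs hsc
  rw [hx_eq, hs_sq, div_mul_eq_mul_div, div_le_iff₀ hab] at scaled
  linarith

-- Compare `g` at a maximizer `p` of `(R - p) * g p` on `[x, R]`, where `R = 3 * x - 2 * a`, with
-- its value at the midpoint of `[p, R]`.
lemma le_six_mul (hg : OperatorLogConvex g) (hg_cont : ContinuousOn g (Set.Ioi 0))
    (hg_pos : ∀ x, 0 < x → 0 < g x) {a x : ℝ} (ha : 0 < a) (hax : a < x) : g x ≤ 6 * g a := by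
  obtain ⟨R, hR⟩ : ∃ R, R = 3 * x - 2 * a := ⟨_, rfl⟩
  have hxR : x ≤ R := by linarith [hR]
  have W_cont : ContinuousOn (fun p => (R - p) * g p) (Set.Icc x R) :=
    (by fun_prop : ContinuousOn (fun p => R - p) _).mul
      (hg_cont.mono fun p hp => (ha.trans hax).trans_le hp.1)
  obtain ⟨p, ⟨hxp, hpR'⟩, hp_max⟩ :=
    isCompact_Icc.exists_isMaxOn (Set.nonempty_Icc.2 hxR) W_cont
  have hx_le : (R - x) * g x ≤ (R - p) * g p := hp_max ⟨le_rfl, hxR⟩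
  have hgx := hg_pos x (by linarith)
  have hgp := hg_pos p (by linarith)
  have hpR : p < R := by
    refine hpR'.lt_of_ne ?_
    rintro rfl
    nlinarith
  obtain ⟨b, hb⟩ : ∃ b, b = (p + R) / 2 := ⟨_, rfl⟩
  have hgb : g b ≤ 2 * g p := by
    have hb_le : (R - b) * g b ≤ (R - p) * g p := hp_max ⟨by linarith, by linarith⟩
    nlinarith
  have hp_le : (R - p) * g p ≤ 4 * (R - a) * g a := by
    have hga := hg_pos a ha
    have hgb_pos := hg_pos b (by linarith)
    refine le_of_mul_le_mul_right ?_ hgp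
    calc (R - p) * g p * g p = 2 * ((b - p) * g p ^ 2) := by rw [hb]; ring
      _ ≤ 2 * ((b - a) * (g a * g b)) := by
        gcongr 2 * ?_
        exact hg.sub_mul_sq_le hg_pos ha (by linarith) (by linarith)
      _ ≤ 2 * ((R - a) * (g a * (2 * g p))) := by gcongr <;> linarith
      _ = 4 * (R - a) * g a * g p := by ring
  nlinarith

lemma cfc_le_smul_one (hg : OperatorLogConvex g) (hg_cont : ContinuousOn g (Set.Ioi 0))
    (hg_pos : ∀ x, 0 < x → 0 < g x) {ι : Type*} [Fintype ι] [DecidableEq ι] {A : Matrix ι ι ℂ}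
    {α : ℝ} (hα : 0 < α) (hA : α • (1 : Matrix ι ι ℂ) ≤ A) :
    cfc g A ≤ (6 * g α) • (1 : Matrix ι ι ℂ) := by
  have hA' : IsSelfAdjoint A := (posDef_of_posDef_of_le (PosDef.one.smul hα) hA).1
  rw [← Algebra.algebraMap_eq_smul_one] at hA ⊢
  refine cfc_le_algebraMap g _ A (fun x hx => ?_) (continuousOn_spectrum_real g A)
  rcases ((algebraMap_le_iff_le_spectrum (a := A)).1 hA x hx).eq_or_lt with rfl | hαx
  · linarith [hg_pos α hα]
  · exact hg.le_six_mul hg_cont hg_pos hα hαx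

theorem operatorAntitone (hg : OperatorLogConvex g) (hg_cont : ContinuousOn g (Set.Ioi 0))
    (hg_pos : ∀ x, 0 < x → 0 < g x) : OperatorAntitone g := by
  intro n A B hA _ hAB
  obtain ⟨α, hα, hαA⟩ := exists_pos_smul_one_le hA
  have bound : ∀ t ∈ Set.Ioo (0 : ℝ) 1,
      cfc g B ≤ (1 - t) • cfc g A + t • (6 * g α) • (1 : Matrix (Fin n) (Fin n) ℂ) := by
    intro t ht
    have ht' : t ∈ Set.Icc (0 : ℝ) 1 := Set.Ioo_subset_Icc_self ht
    set F := A + t⁻¹ • (B - A) with hF_def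
    have hAF : A ≤ F :=
      le_add_of_nonneg_right (smul_nonneg (inv_nonneg.2 ht.1.le) (sub_nonneg.2 hAB))
    have hF := posDef_of_posDef_of_le hA hAF
    have warith_eq : warith t A F = B := by
      rw [warith, hF_def, smul_add, smul_inv_smul₀ ht.1.ne']
      module
    calc cfc g B = cfc g (warith t A F) := by rw [warith_eq]
      _ ≤ wgeom t (cfc g A) (cfc g F) := hg n A F hA hF t ht'
      _ ≤ (1 - t) • cfc g A + t • cfc g F :=
        wgeom_le_warith (posDef_cfc hA hg_pos) (posDef_cfc hF hg_pos) ht'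
      _ ≤ (1 - t) • cfc g A + t • (6 * g α) • (1 : Matrix (Fin n) (Fin n) ℂ) := by
        gcongr
        · exact ht.1.le
        · exact hg.cfc_le_smul_one hg_cont hg_pos hα (hαA.trans hAF)
  have bound_tendsto : Tendsto
      (fun t : ℝ => (1 - t) • cfc g A + t • (6 * g α) • (1 : Matrix (Fin n) (Fin n) ℂ)) (𝓝[>] 0)
      (𝓝 (cfc g A)) :=
    (Continuous.tendsto' (by fun_prop) _ _ (by simp)).mono_left nhdsWithin_le_nhds
  exact ge_of_tendsto bound_tendsto (by
    filter_upwards [Ioo_mem_nhdsGT one_pos] with t ht using bound t ht)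

end OperatorLogConvex

theorem operatorAntitone_iff_operatorLogConvex {g : ℝ → ℝ} (hg_cont : ContinuousOn g (Set.Ioi 0))
    (hg_pos : ∀ x, 0 < x → 0 < g x) : OperatorAntitone g ↔ OperatorLogConvex g :=
  ⟨fun hg => hg.operatorLogConvex hg_cont hg_pos, fun hg => hg.operatorAntitone hg_cont hg_pos⟩

lemma operatorMonotone_iff_operatorAntitone_comp_inv {f : ℝ → ℝ} :
    OperatorMonotone f ↔ OperatorAntitone fun x => f x⁻¹ := by
  constructor
  · intro hf n A B hA hB hAB
    rw [← cfc_inv_eq_cfc_comp_inv hA, ← cfc_inv_eq_cfc_comp_inv hB]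
    exact hf n B⁻¹ A⁻¹ hB.inv hA.inv (inv_le_inv_of_posDef hA hAB)
  · intro hf n A B hA hB hAB
    rw [← cfc_comp_inv_inv hA, ← cfc_comp_inv_inv hB]
    exact hf n B⁻¹ A⁻¹ hB.inv hA.inv (inv_le_inv_of_posDef hA hAB)

lemma operatorLogConvex_comp_inv_iff {f : ℝ → ℝ} :
    OperatorLogConvex (fun x => f x⁻¹) ↔
      ∀ (n : ℕ) (A B : Matrix (Fin n) (Fin n) ℂ), A.PosDef → B.PosDef →
        ∀ t ∈ Set.Icc (0 : ℝ) 1, MLE (cfc f (wharm t A B)) (wgeom t (cfc f A) (cfc f B)) := by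
  have warith_inv_inv {n : ℕ} {A B : Matrix (Fin n) (Fin n) ℂ} (hA : A.PosDef) (hB : B.PosDef)
      {t : ℝ} (ht : t ∈ Set.Icc (0 : ℝ) 1) :
      cfc (fun x => f x⁻¹) (warith t A⁻¹ B⁻¹) = cfc f (wharm t A B) :=
    (cfc_inv_eq_cfc_comp_inv (posDef_convexCombination hA.inv hB.inv ht) f).symm
  constructor
  · intro hf n A B hA hB t ht
    rw [← warith_inv_inv hA hB ht, ← cfc_comp_inv_inv hA, ← cfc_comp_inv_inv hB]
    exact hf n A⁻¹ B⁻¹ hA.inv hB.inv t ht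
  · intro hf n A B hA hB t ht
    have h := hf n A⁻¹ B⁻¹ hA.inv hB.inv t ht
    rwa [← warith_inv_inv hA.inv hB.inv ht, inv_inv_of_posDef hA, inv_inv_of_posDef hB,
      cfc_inv_eq_cfc_comp_inv hA, cfc_inv_eq_cfc_comp_inv hB] at h

theorem stmt_7 (f : ℝ → ℝ) (hf : ContinuousOn f (Set.Ioi 0))
    (hf' : ∀ x ∈ Set.Ioi (0:ℝ), f x ∈ Set.Ioi (0:ℝ)) :
    OperatorMonotone f ↔
      ∀ (n : ℕ) (A B : Matrix (Fin n) (Fin n) ℂ), A.PosDef → B.PosDef →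
        ∀ t ∈ Set.Icc (0:ℝ) 1,
          MLE (cfc f (wharm t A B)) (wgeom t (cfc f A) (cfc f B)) := by
  have comp_inv_cont : ContinuousOn (fun x : ℝ => f x⁻¹) (Set.Ioi 0) :=
    hf.comp (continuousOn_id.inv₀ fun x hx => (Set.mem_Ioi.1 hx).ne') fun x hx =>
      Set.mem_Ioi.2 (inv_pos.2 hx)
  rw [operatorMonotone_iff_operatorAntitone_comp_inv, ← operatorLogConvex_comp_inv_iff]
  exact operatorAntitone_iff_operatorLogConvex comp_inv_cont fun x hx => hf' _ (inv_pos.2 hx)
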